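/- arXiv:1911.00785 — 2 statements merged into one kernel-verified Lean document; each statement's English description precedes it below -/
import Mathlib

section
/- Every expansive action of a countably infinite group G on a compact metrizable space X with the topological Markov property has the uniform topological Markov property. -/
open Pointwise

/-- Supremum over `g ∈ K` of `ρ (g • x) (g • y)`. -/
noncomputable def supOf {G X : Type*} [SMul G X] (ρ : X → X → ℝ) (K : Set G) (x y : X) : ℝ :=
  ⨆ g : K, ρ ((g : G) • x) ((g : G) • y)

/-- `d_K(x,y) = sup_{g ∈ K} d(g x, g y)`. -/
noncomputable def supD {G X : Type*} [SMul G X] [PseudoMetricSpace X] (K : Set G) (x y : X) : ℝ :=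
  supOf dist K x y

/-- `B` is an `(ε,δ)`-memory set for `A`. -/
def IsMemorySet (G X : Type*) [SMul G X] [PseudoMetricSpace X] (ε δ : ℝ)
    (A B : Finset G) : Prop :=
  (A : Set G) ⊆ (B : Set G) ∧
    ∀ x y : X, supD ((B : Set G) \ (A : Set G)) x y ≤ δ →
      ∃ z : X, supD (B : Set G) x z ≤ ε ∧ supD (Set.univ \ (A : Set G)) y z ≤ ε

/-- The topological Markov property. -/
def TMP (G X : Type*) [SMul G X] [PseudoMetricSpace X] : Prop :=
  ∀ ε > (0 : ℝ), ∃ δ > (0 : ℝ), ∀ A : Finset G, ∃ B : Finset G, IsMemorySet G X ε δ A B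

/-- The strong topological Markov property. -/
def StrongTMP (G X : Type*) [Group G] [DecidableEq G] [MulAction G X]
    [PseudoMetricSpace X] : Prop :=
  ∀ ε > (0 : ℝ), ∃ δ > (0 : ℝ), ∃ F : Finset G, (1 : G) ∈ F ∧
    ∀ A : Finset G, IsMemorySet G X ε δ A (F * A)

/-- `V` is `B`-separated. -/
def Separated {G : Type*} [Mul G] (B V : Set G) : Prop :=
  ∀ v₁ ∈ V, ∀ v₂ ∈ V, v₁ ≠ v₂ → Disjoint (B * ({v₁} : Set G)) (B * ({v₂} : Set G))

/-- `B` is a uniform `(ε,δ)`-memory set for `A`. -/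
def IsUniformMemorySet (G X : Type*) [Group G] [MulAction G X] [PseudoMetricSpace X]
    (ε δ : ℝ) (A B : Finset G) : Prop :=
  IsMemorySet G X ε δ A B ∧
    ∀ V : Finset G, Separated (B : Set G) (V : Set G) →
      ∀ (xv : G → X) (y : X),
        (∀ v ∈ V, supD (((B : Set G) \ (A : Set G)) * ({v} : Set G)) (xv v) y ≤ δ) →
        ∃ z : X, (∀ v ∈ V, supD ((B : Set G) * ({v} : Set G)) z (xv v) ≤ ε) ∧
          supD (Set.univ \ ((A : Set G) * (V : Set G))) z y ≤ ε

/-- The uniform topological Markov property. -/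
def UniformTMP (G X : Type*) [Group G] [MulAction G X] [PseudoMetricSpace X] : Prop :=
  ∀ ε > (0 : ℝ), ∃ δ > (0 : ℝ), ∀ A : Finset G, ∃ B : Finset G,
    IsUniformMemorySet G X ε δ A B

/-- The uniform strong topological Markov property. -/
def UniformStrongTMP (G X : Type*) [Group G] [DecidableEq G] [MulAction G X]
    [PseudoMetricSpace X] : Prop :=
  ∀ ε > (0 : ℝ), ∃ δ > (0 : ℝ), ∃ F : Finset G, (1 : G) ∈ F ∧
    ∀ A : Finset G, IsUniformMemorySet G X ε δ A (F * A)

/-- Expansivity of the action. -/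
def Expansive (G X : Type*) [SMul G X] [PseudoMetricSpace X] : Prop :=
  ∃ c > (0 : ℝ), ∀ x y : X, x ≠ y → ∃ g : G, dist (g • x) (g • y) > c

/-- `(x,y)` is an asymptotic pair. -/
def Asymptotic (G : Type*) {X : Type*} [SMul G X] [PseudoMetricSpace X] (x y : X) : Prop :=
  ∀ ε > (0 : ℝ), ∃ F : Finset G, ∀ g ∉ F, dist (g • x) (g • y) ≤ ε

/-- `(S,δ)` pseudo-orbit. -/
def IsPseudoOrbit {G X : Type*} [Mul G] [SMul G X] [PseudoMetricSpace X]
    (S : Finset G) (δ : ℝ) (w : G → X) : Prop :=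
  ∀ s ∈ S, ∀ g : G, dist (s • w g) (w (s * g)) < δ

/-- `w` is `ε`-traced by `x`. -/
def Traces {G X : Type*} [SMul G X] [PseudoMetricSpace X] (ε : ℝ) (x : X) (w : G → X) : Prop :=
  ∀ g : G, dist (g • x) (w g) ≤ ε

/-- Pseudo-orbit tracing property. -/
def POTP (G X : Type*) [Mul G] [SMul G X] [PseudoMetricSpace X] : Prop :=
  ∀ ε > (0 : ℝ), ∃ δ > (0 : ℝ), ∃ S : Finset G, ∀ w : G → X,
    IsPseudoOrbit S δ w → ∃ x : X, Traces ε x w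

/-- `J` is an independence set for the tuple `U`. -/
def IndepSet {G X : Type*} [SMul G X] {n : ℕ} (U : Fin n → Set X) (J : Set G) : Prop :=
  ∀ I : Finset G, (I : Set G) ⊆ J → I.Nonempty → ∀ φ : G → Fin n,
    (⋂ s ∈ I, (fun x : X => s • x) ⁻¹' U (φ s)).Nonempty

/-- The tuple `U` has positive independence density. -/
def PosIndepDensity (G : Type*) {X : Type*} [SMul G X] {n : ℕ} (U : Fin n → Set X) : Prop :=
  ∃ q > (0 : ℝ), ∀ F : Finset G, ∃ J : Finset G, J ⊆ F ∧
    q * (F.card : ℝ) ≤ (J.card : ℝ) ∧ IndepSet U (J : Set G)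

/-- Orbit IE-tuple. -/
def IETuple (G : Type*) {X : Type*} [SMul G X] [TopologicalSpace X] {n : ℕ}
    (x : Fin n → X) : Prop :=
  ∀ U : Fin n → Set X, (∀ i, IsOpen (U i)) → (∀ i, x i ∈ U i) → PosIndepDensity G U

/-- Minimality of the action. -/
def MinimalAction (G X : Type*) [SMul G X] [TopologicalSpace X] : Prop :=
  ∀ Y : Set X, IsClosed Y → (∀ g : G, ∀ y ∈ Y, g • y ∈ Y) → Y.Nonempty → Y = Set.univ

/-- Følner sequence. -/
def FolnerSeq (G : Type*) [Group G] [DecidableEq G] (F : ℕ → Finset G) : Prop :=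
  (∀ n, (F n).Nonempty) ∧
    ∀ K : Finset G, Filter.Tendsto
      (fun n => ((symmDiff (K * F n) (F n)).card : ℝ) / ((F n).card : ℝ))
      Filter.atTop (nhds 0)

/-!
Glue the `x v` into `y` one translate at a time, using a memory set at each step. A single step
loses a bounded factor of precision, which would accumulate over `V`; but as long as the result is
within the expansivity constant `c`, expansivity improves it: two points `c`-close on `F * K`, for a
suitable finite `F`, are `η`-close on `K`, with `η` arbitrarily small. If `B ⊇ F * F⁻¹ * A`, this
brings every gluing of precision `c` back to the precision `η + δ`, independently of `V`.
-/

section SupD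

variable {G X : Type*} [PseudoMetricSpace X] {K L : Set G} {x y z : X} {r s : ℝ}

theorem supD_nonneg [SMul G X] : 0 ≤ supD K x y :=
  Real.iSup_nonneg fun _ => dist_nonneg

theorem supD_self [SMul G X] : supD K x x = 0 := by
  simp [supD, supOf]

theorem supD_comm [SMul G X] : supD K x y = supD K y x := by
  simp only [supD, supOf, dist_comm]

theorem supD_le [SMul G X] (hr : 0 ≤ r) (h : ∀ g ∈ K, dist (g • x) (g • y) ≤ r) :
    supD K x y ≤ r :=
  Real.iSup_le (fun g => h g g.2) hr

theorem supD_smul_smul [Monoid G] [MulAction G X] (v : G) :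
    supD K (v • x) (v • y) = supD (K * {v}) x y := by
  simp only [supD, supOf, Set.mul_singleton,
    ← sSup_image' (f := fun g : G => dist (g • x) (g • y)),
    ← sSup_image' (f := fun g : G => dist (g • v • x) (g • v • y)), Set.image_image, mul_smul]

variable [BoundedSpace X]

theorem dist_smul_le_supD [SMul G X] {g : G} (hg : g ∈ K) :
    dist (g • x) (g • y) ≤ supD K x y := by
  have hbdd : BddAbove (Set.range fun k : K => dist ((k : G) • x) ((k : G) • y)) := by
    refine ⟨Metric.diam (Set.univ : Set X), ?_⟩
    rintro _ ⟨k, rfl⟩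
    exact Metric.dist_le_diam_of_mem (Bornology.isBounded_univ.2 ‹_›) trivial trivial
  exact le_ciSup hbdd ⟨g, hg⟩

theorem supD_mono [SMul G X] (hKL : K ⊆ L) : supD K x y ≤ supD L x y :=
  supD_le supD_nonneg fun _ hg => dist_smul_le_supD (hKL hg)

theorem supD_le_of_disjoint [SMul G X] (hL : supD (Set.univ \ L) x y ≤ r) (hKL : Disjoint K L) :
    supD K x y ≤ r :=
  (supD_mono (Set.subset_sdiff.2 ⟨Set.subset_univ K, hKL⟩)).trans hL

theorem supD_le_add [SMul G X] (hxy : supD K x y ≤ r) (hyz : supD K y z ≤ s) :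
    supD K x z ≤ r + s :=
  supD_le (add_nonneg (supD_nonneg.trans hxy) (supD_nonneg.trans hyz)) fun g hg =>
    (dist_triangle _ (g • y) _).trans <|
      add_le_add ((dist_smul_le_supD hg).trans hxy) ((dist_smul_le_supD hg).trans hyz)

theorem supD_union_le [SMul G X] (hK : supD K x y ≤ r) (hL : supD L x y ≤ r) :
    supD (K ∪ L) x y ≤ r :=
  supD_le (supD_nonneg.trans hK) fun _ hg =>
    hg.elim (fun h => (dist_smul_le_supD h).trans hK) (fun h => (dist_smul_le_supD h).trans hL)

end SupD

section Separated

variable {G : Type*} [Mul G] {A B V W : Set G} {a b v w : G}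

theorem Separated.mono (hV : Separated B V) (hWV : W ⊆ V) : Separated B W :=
  fun v hv w hw => hV v (hWV hv) w (hWV hw)

theorem Separated.eq_of_mul_eq (hV : Separated B V) (hv : v ∈ V) (hw : w ∈ V) (ha : a ∈ B)
    (hb : b ∈ B) (h : a * v = b * w) : v = w := by
  by_contra hvw
  exact Set.disjoint_left.1 (hV v hv w hw hvw) (Set.mul_mem_mul ha rfl)
    (h ▸ Set.mul_mem_mul hb rfl)

theorem Separated.disjoint_mul (hV : Separated B (insert v V)) (hv : v ∉ V) (hAB : A ⊆ B) :
    Disjoint (B * {v}) (A * V) := by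
  rw [Set.disjoint_left]
  rintro _ ⟨b, hb, _, rfl, rfl⟩ ⟨a, ha, w, hw, h⟩
  exact hv (hV.eq_of_mul_eq (.inr hw) (.inl rfl) (hAB ha) hb h ▸ hw)

theorem Separated.disjoint_sdiff_mul [IsRightCancelMul G] (hV : Separated B V) (hv : v ∈ V)
    (hAB : A ⊆ B) : Disjoint ((B \ A) * {v}) (A * V) := by
  rw [Set.disjoint_left]
  rintro _ ⟨b, ⟨hb, hbA⟩, _, rfl, rfl⟩ ⟨a, ha, w, hw, h⟩
  obtain rfl := hV.eq_of_mul_eq hw hv (hAB ha) hb h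
  exact hbA (mul_right_cancel h ▸ ha)

end Separated

section IsExpansivityWindow

variable {G X : Type*} [PseudoMetricSpace X] {F K : Set G} {c η : ℝ} {x y : X}

/-- `F` is a window, containing the identity, through which expansivity with constant `c` is seen at
scale `η`: points that stay `c`-close along `F` are `η`-close. -/
structure IsExpansivityWindow (X : Type*) [One G] [SMul G X] [PseudoMetricSpace X]
    (F : Set G) (c η : ℝ) : Prop where
  one_mem : 1 ∈ F
  dist_le : ∀ x y : X, supD F x y ≤ c → dist x y ≤ η

theorem exists_finset_dist_le_of_expansive [SMul G X] [ContinuousConstSMul G X] [CompactSpace X]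
    (hc : ∀ x y : X, x ≠ y → ∃ g : G, dist (g • x) (g • y) > c) (hη : 0 < η) :
    ∃ F : Finset G, ∀ x y : X, (∀ g ∈ F, dist (g • x) (g • y) ≤ c) → dist x y ≤ η := by
  have hfar : IsCompact {p : X × X | η ≤ dist p.1 p.2} :=
    (isClosed_le continuous_const continuous_dist).isCompact
  have hclosed (g : G) : IsClosed {p : X × X | dist (g • p.1) (g • p.2) ≤ c} :=
    isClosed_le (by fun_prop) continuous_const
  obtain ⟨F, hF⟩ := hfar.elim_finite_subfamily_closed _ hclosed <| by
    refine Set.eq_empty_of_forall_notMem fun p ⟨hp, hpc⟩ => ?_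
    obtain ⟨g, hg⟩ := hc p.1 p.2 fun h => (hη.trans_le hp).ne' (by rw [h, dist_self])
    exact hg.not_ge (Set.mem_iInter.1 hpc g)
  refine ⟨F, fun x y h => le_of_not_gt fun hxy => ?_⟩
  exact Set.eq_empty_iff_forall_notMem.1 hF (x, y) ⟨hxy.le, Set.mem_iInter₂.2 h⟩

theorem exists_isExpansivityWindow [One G] [SMul G X] [ContinuousConstSMul G X]
    [CompactSpace X] (hc : ∀ x y : X, x ≠ y → ∃ g : G, dist (g • x) (g • y) > c) (hη : 0 < η) :
    ∃ F : Finset G, IsExpansivityWindow X (F : Set G) c η := by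
  classical
  obtain ⟨F, hF⟩ := exists_finset_dist_le_of_expansive hc hη
  refine ⟨insert 1 F, by simp, fun x y hxy => hF x y fun g hg => ?_⟩
  exact (dist_smul_le_supD (Finset.mem_coe.2 (Finset.mem_insert_of_mem hg))).trans hxy

theorem IsExpansivityWindow.subset_mul [MulOneClass G] [SMul G X]
    (hF : IsExpansivityWindow X F c η) : K ⊆ F * K :=
  Set.subset_mul_right K hF.one_mem

theorem IsExpansivityWindow.supD_le_of_mul [Monoid G] [MulAction G X] [BoundedSpace X]
    (hF : IsExpansivityWindow X F c η) (h : supD (F * K) x y ≤ c) : supD K x y ≤ η := by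
  have hdist {g : G} (hg : g ∈ K) : dist (g • x) (g • y) ≤ η := by
    refine hF.dist_le _ _ ?_
    rw [supD_smul_smul]
    exact (supD_mono (Set.mul_subset_mul_left (Set.singleton_subset_iff.2 hg))).trans h
  have hη : 0 ≤ η := by
    simpa using hF.dist_le x x (by rw [supD_self]; exact supD_nonneg.trans h)
  exact supD_le hη fun _ => hdist

end IsExpansivityWindow

section IsGluing

variable {G X : Type*} [Group G] [MulAction G X] [PseudoMetricSpace X]
  {A B C F V : Set G} {x : G → X} {y z w : X} {v : G} {c r s δ δ₀ ε η : ℝ}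

/-- `z` glues the points `x v`, `v ∈ V`, into `y` with precision `r`: it follows `x v` along `B * v`
and follows `y` off `A * V`. This is the conclusion on `z` in the definition of a uniform memory
set. -/
def IsGluing (r : ℝ) (A B V : Set G) (x : G → X) (y z : X) : Prop :=
  (∀ v ∈ V, supD (B * {v}) z (x v) ≤ r) ∧ supD (Set.univ \ (A * V)) z y ≤ r

theorem IsGluing.mono (hz : IsGluing r A B V x y z) (hrs : r ≤ s) : IsGluing s A B V x y z :=
  ⟨fun v hv => (hz.1 v hv).trans hrs, hz.2.trans hrs⟩

theorem IsMemorySet.exists_translate {A B : Finset G} (h : IsMemorySet G X ε δ A B) (v : G)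
    {x y : X} (hxy : supD (((B : Set G) \ A) * {v}) x y ≤ δ) :
    ∃ z : X, supD ((B : Set G) * {v}) x z ≤ ε ∧ supD (Set.univ \ ((A : Set G) * {v})) y z ≤ ε := by
  obtain ⟨z, hxz, hyz⟩ := h.2 (v • x) (v • y) (by rwa [supD_smul_smul])
  refine ⟨v⁻¹ • z, ?_, ?_⟩
  · rwa [← supD_smul_smul, smul_inv_smul]
  · have hcompl : (Set.univ \ (A : Set G)) * {v} = Set.univ \ ((A : Set G) * {v}) := by
      ext g
      simp [Set.mul_singleton]
    rwa [← hcompl, ← supD_smul_smul, smul_inv_smul]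

variable [BoundedSpace X]

theorem IsGluing.supD_inv_mul_le (hz : IsGluing c A B V x y z) (hF : IsExpansivityWindow X F c η)
    (hB : F * (F⁻¹ * A) ⊆ B) (hv : v ∈ V) : supD (F⁻¹ * A * {v}) z (x v) ≤ η := by
  refine hF.supD_le_of_mul ((supD_mono ?_).trans (hz.1 v hv))
  rw [← mul_assoc]
  exact Set.mul_subset_mul_right hB

theorem IsGluing.supD_sdiff_inv_mul_le (hz : IsGluing c A B V x y z)
    (hF : IsExpansivityWindow X F c η) : supD (Set.univ \ (F⁻¹ * A * V)) z y ≤ η := by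
  refine hF.supD_le_of_mul (supD_le_of_disjoint hz.2 ?_)
  rw [Set.disjoint_left]
  rintro _ ⟨f, hf, g, ⟨-, hg⟩, rfl⟩ ⟨a, ha, v, hv, hav⟩
  exact hg ⟨f⁻¹ * a, Set.mul_mem_mul (Set.inv_mem_inv.2 hf) ha, v, hv, by
    simpa only [mul_assoc, inv_mul_eq_iff_eq_mul] using hav⟩

theorem IsGluing.improve (hz : IsGluing c A B V x y z) (hF : IsExpansivityWindow X F c η)
    (hB : F * (F⁻¹ * A) ⊆ B) (hδ : 0 ≤ δ) (hsep : Separated B V)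
    (hxy : ∀ v ∈ V, supD ((B \ A) * {v}) (x v) y ≤ δ) : IsGluing (η + δ) A B V x y z := by
  have hAF : A ⊆ F⁻¹ * A := Set.subset_mul_right A (by simpa using hF.one_mem)
  have hFB : F⁻¹ * A ⊆ B := hF.subset_mul.trans hB
  have hnear (v) (hv : v ∈ V) : supD (F⁻¹ * A * {v}) z (x v) ≤ η := hz.supD_inv_mul_le hF hB hv
  have hfar : supD (Set.univ \ (F⁻¹ * A * V)) z y ≤ η := hz.supD_sdiff_inv_mul_le hF
  have hη : 0 ≤ η := supD_nonneg.trans hfar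
  refine ⟨fun v hv => ?_, supD_le (add_nonneg hη hδ) fun g ⟨_, hgA⟩ => ?_⟩
  · have hout : supD ((B \ (F⁻¹ * A)) * {v}) z (x v) ≤ η + δ := by
      refine supD_le_add (supD_le_of_disjoint hfar (hsep.disjoint_sdiff_mul hv hFB)) ?_
      rw [supD_comm]
      exact (supD_mono (Set.mul_subset_mul_right (Set.sdiff_subset_sdiff_right hAF))).trans
        (hxy v hv)
    rw [← Set.union_sdiff_cancel hFB, Set.union_mul]
    exact supD_union_le ((hnear v hv).trans (by linarith)) hout
  · by_cases hg : g ∈ F⁻¹ * A * V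
    · obtain ⟨b, hb, v, hv, rfl⟩ := hg
      have hbA : b ∉ A := fun h => hgA (Set.mul_mem_mul h hv)
      have hin : supD (((F⁻¹ * A) \ A) * {v}) z y ≤ η + δ :=
        supD_le_add ((supD_mono (Set.mul_subset_mul_right Set.sdiff_subset)).trans (hnear v hv))
          ((supD_mono (Set.mul_subset_mul_right (Set.sdiff_subset_sdiff_left hFB))).trans
            (hxy v hv))
      exact hin.trans' (dist_smul_le_supD (Set.mul_mem_mul ⟨hb, hbA⟩ rfl))
    · exact (hfar.trans' (dist_smul_le_supD ⟨trivial, hg⟩)).trans (by linarith)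

theorem IsGluing.insert_of_supD_le (hz : IsGluing ε A B V x y z) (hAC : A ⊆ C) (hCB : C ⊆ B)
    (hsep : Separated B (insert v V)) (hv : v ∉ V) (hxy : supD ((B \ A) * {v}) (x v) y ≤ δ)
    (hxw : supD (C * {v}) (x v) w ≤ ε) (hzw : supD (Set.univ \ (A * {v})) z w ≤ ε) :
    IsGluing (2 * ε + δ) A B (insert v V) x y w := by
  have hAB : A ⊆ B := hAC.trans hCB
  have hε : 0 ≤ ε := supD_nonneg.trans hxw
  have hδ : 0 ≤ δ := supD_nonneg.trans hxy
  have hwz {K : Set G} (hK : Disjoint K (A * {v})) : supD K w z ≤ ε := by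
    rw [supD_comm]
    exact supD_le_of_disjoint hzw hK
  refine ⟨?_, ?_⟩
  · rintro u (rfl | hu)
    · have hout : supD ((B \ C) * {u}) w (x u) ≤ ε + (ε + δ) := by
        refine supD_le_add (hwz ?_) (supD_le_add (y := y) (supD_le_of_disjoint hz.2 ?_) ?_)
        · exact ((hsep.mono (W := {u}) (by simp)).disjoint_sdiff_mul rfl hAB).mono_left
            (Set.mul_subset_mul_right (Set.sdiff_subset_sdiff_right hAC))
        · exact (hsep.disjoint_mul hv hAB).mono_left (Set.mul_subset_mul_right Set.sdiff_subset)
        · rw [supD_comm]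
          exact (supD_mono (Set.mul_subset_mul_right (Set.sdiff_subset_sdiff_right hAC))).trans hxy
      rw [← Set.union_sdiff_cancel hCB, Set.union_mul]
      exact supD_union_le (by rw [supD_comm]; linarith) (by linarith)
    · have hdisj : Disjoint (B * {u}) (A * {v}) :=
        (hsep u (.inr hu) v (.inl rfl) fun h => hv (h ▸ hu)).mono_right
          (Set.mul_subset_mul_right hAB)
      linarith [supD_le_add (hwz hdisj) (hz.1 u hu)]
  · have hw : supD (Set.univ \ (A * insert v V)) w y ≤ ε + ε :=
      supD_le_add (hwz (Set.disjoint_sdiff_left.mono_right (by gcongr; simp)))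
        (supD_le_of_disjoint hz.2 (Set.disjoint_sdiff_left.mono_right (by gcongr; simp)))
    linarith

theorem IsMemorySet.exists_isGluing_insert {A C : Finset G} (hC : IsMemorySet G X ε δ₀ A C)
    (hF : IsExpansivityWindow X F c η) (hFC : F * C ⊆ B) (hεc : ε ≤ c) (hδ₀ : η + δ ≤ δ₀)
    (hsep : Separated B (insert v V)) (hv : v ∉ V) (hxy : supD ((B \ A) * {v}) (x v) y ≤ δ)
    (hz : IsGluing ε A B V x y z) : ∃ w, IsGluing (2 * ε + δ) A B (insert v V) x y w := by
  have hCB : (C : Set G) ⊆ B := hF.subset_mul.trans hFC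
  have hAB : (A : Set G) ⊆ B := hC.1.trans hCB
  have hzy : supD ((C : Set G) * {v}) z y ≤ η := by
    have hB : supD (B * {v}) z y ≤ ε := supD_le_of_disjoint hz.2 (hsep.disjoint_mul hv hAB)
    refine hF.supD_le_of_mul ((supD_mono ?_).trans (hB.trans hεc))
    rw [← mul_assoc]
    exact Set.mul_subset_mul_right hFC
  have hxz : supD (((C : Set G) \ A) * {v}) (x v) z ≤ δ + η := by
    refine supD_le_add (y := y) ((supD_mono ?_).trans hxy) ?_
    · exact Set.mul_subset_mul_right (Set.sdiff_subset_sdiff_left hCB)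
    · rw [supD_comm]
      exact (supD_mono (Set.mul_subset_mul_right Set.sdiff_subset)).trans hzy
  obtain ⟨w, hxw, hzw⟩ := hC.exists_translate v (hxz.trans (by linarith))
  exact ⟨w, hz.insert_of_supD_le hC.1 hCB hsep hv hxy hxw hzw⟩

theorem IsMemorySet.exists_isGluing {A C : Finset G} (hC : IsMemorySet G X ε δ₀ A C)
    (hF : IsExpansivityWindow X F c η) (hFA : F * (F⁻¹ * A) ⊆ B) (hFC : F * C ⊆ B)
    (hε : 0 ≤ ε) (hδ : 0 ≤ δ) (hc : 2 * ε + δ ≤ c) (hδ₀ : η + δ ≤ δ₀) (hηε : η + δ ≤ ε)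
    (hV : V.Finite) (hsep : Separated B V) (hxy : ∀ v ∈ V, supD ((B \ A) * {v}) (x v) y ≤ δ) :
    ∃ z, IsGluing ε A B V x y z := by
  induction V, hV using Set.Finite.induction_on with
  | empty => exact ⟨y, by simp, supD_self.trans_le hε⟩
  | insert hv _ ih =>
    obtain ⟨z, hz⟩ := ih (hsep.mono (Set.subset_insert _ _)) fun u hu => hxy u (.inr hu)
    obtain ⟨w, hw⟩ := hC.exists_isGluing_insert hF hFC (by linarith) hδ₀ hsep hv
      (hxy _ (.inl rfl)) hz
    exact ⟨w, ((hw.mono hc).improve hF hFA hδ hsep hxy).mono hηε⟩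

end IsGluing

section IsUniformMemorySet

variable {G X : Type*} [Group G] [MulAction G X] [PseudoMetricSpace X]
  {A B C : Finset G} {F : Set G} {c δ δ₀ ε ε' η : ℝ}

theorem isUniformMemorySet_of_exists_isGluing (hAB : A ⊆ B)
    (h : ∀ V : Finset G, Separated (B : Set G) V → ∀ (x : G → X) (y : X),
      (∀ v ∈ V, supD (((B : Set G) \ A) * {v}) (x v) y ≤ δ) → ∃ z, IsGluing ε A B V x y z) :
    IsUniformMemorySet G X ε δ A B := by
  refine ⟨⟨Finset.coe_subset.2 hAB, fun x y hxy => ?_⟩, h⟩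
  obtain ⟨z, hzx, hzy⟩ := h {1} (by simp [Separated]) (fun _ => x) y (by simpa using hxy)
  exact ⟨z, by simpa [supD_comm] using hzx, by simpa [supD_comm] using hzy⟩

theorem IsUniformMemorySet.mono (h : IsUniformMemorySet G X ε δ A B) (hε : ε ≤ ε') :
    IsUniformMemorySet G X ε' δ A B :=
  isUniformMemorySet_of_exists_isGluing (Finset.coe_subset.1 h.1.1) fun V hV x y hxy =>
    let ⟨z, hz⟩ := h.2 V hV x y hxy
    ⟨z, IsGluing.mono hz hε⟩

theorem IsMemorySet.isUniformMemorySet [BoundedSpace X] (hC : IsMemorySet G X ε δ₀ A C)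
    (hF : IsExpansivityWindow X F c η) (hFA : F * (F⁻¹ * A) ⊆ B) (hFC : F * C ⊆ B)
    (hε : 0 ≤ ε) (hδ : 0 ≤ δ) (hc : 2 * ε + δ ≤ c) (hδ₀ : η + δ ≤ δ₀) (hηε : η + δ ≤ ε) :
    IsUniformMemorySet G X ε δ A B :=
  isUniformMemorySet_of_exists_isGluing
    (Finset.coe_subset.1 (hC.1.trans (hF.subset_mul.trans hFC))) fun V hV _ _ hxy =>
      hC.exists_isGluing hF hFA hFC hε hδ hc hδ₀ hηε V.finite_toSet hV hxy

end IsUniformMemorySet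

theorem stmt3_general {G X : Type*} [Group G] [PseudoMetricSpace X] [CompactSpace X]
    [MulAction G X] [ContinuousConstSMul G X] (hexp : Expansive G X) (htmp : TMP G X) :
    UniformTMP G X := by
  classical
  obtain ⟨c, hc, hexp⟩ := hexp
  intro ε hε
  set ε₀ := min ε (c / 3)
  have hε₀ : 0 < ε₀ := by positivity
  have hε₀c : ε₀ ≤ c / 3 := min_le_right _ _
  obtain ⟨δ₀, hδ₀, hmem⟩ := htmp ε₀ hε₀
  obtain ⟨δ, hδ, hδmin⟩ : ∃ δ > 0, δ + δ = min δ₀ ε₀ :=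
    ⟨min δ₀ ε₀ / 2, by positivity, add_halves _⟩
  have hδδ₀ : δ + δ ≤ δ₀ := hδmin.trans_le (min_le_left _ _)
  have hδε₀ : δ + δ ≤ ε₀ := hδmin.trans_le (min_le_right _ _)
  obtain ⟨F, hF⟩ := exists_isExpansivityWindow hexp hδ
  refine ⟨δ, hδ, fun A => ?_⟩
  obtain ⟨C, hC⟩ := hmem A
  refine ⟨F * (F⁻¹ * A) ∪ F * C, IsUniformMemorySet.mono ?_ (min_le_left ε (c / 3))⟩
  exact hC.isUniformMemorySet hF (by simp) (by simp) hε₀.le hδ.le (by linarith) hδδ₀ hδε₀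

/-- Every expansive action of a countably infinite group `G` on a compact
metrizable space `X` with the topological Markov property has the uniform topological Markov
property. -/
theorem stmt3 (G X : Type*) [Group G] [Countable G] [Infinite G]
    [MetricSpace X] [CompactSpace X] [MulAction G X]
    (hcont : ∀ g : G, Continuous fun x : X => g • x)
    (hexp : Expansive G X) (htmp : TMP G X) :
    UniformTMP G X := by
  have : ContinuousConstSMul G X := ⟨hcont⟩
  exact stmt3_general hexp htmp
end

section
/- If an action G ↷ X of a countably infinite group on a compact metrizable space is expansive and has no off-diagonal asymptotic pairs, then G ↷ X has the topological Markov property. -/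
open Pointwise

/-!
Let `c` be an expansivity constant. By compactness, points at distance at least `ε` are
`c`-separated by one of finitely many elements of `G`, so a pair that is `c`-close off a finite set
is asymptotic, hence trivial. Thus for every finite `A` the elements outside `A` already separate
points at scale `min c ε`, and by compactness again finitely many of them, `F`, detect every pair
that is `ε`-apart somewhere on `A`. A pair that is `min c ε`-close on `F` is therefore `ε`-close on
`B = A ∪ F`, and `B` is a memory set for `A` with the trivial gluing `z = y`.
-/

open Filter

section SupD

variable {G X : Type*} [SMul G X] [PseudoMetricSpace X]

theorem supD_le_iff [BoundedSpace X] {K : Set G} {x y : X} {r : ℝ} (hr : 0 ≤ r) :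
    supD K x y ≤ r ↔ ∀ g ∈ K, dist (g • x) (g • y) ≤ r := by
  have hbdd : BddAbove (Set.range fun g : K ↦ dist ((g : G) • x) ((g : G) • y)) :=
    ⟨Metric.diam (Set.univ : Set X), Set.forall_mem_range.2 fun _ ↦
      Metric.dist_le_diam_of_mem (Bornology.isBounded_univ.2 ‹_›) trivial trivial⟩
  exact ⟨fun h g hg ↦ (le_ciSup hbdd ⟨g, hg⟩).trans h,
    fun h ↦ Real.iSup_le (fun g ↦ h g g.2) hr⟩

theorem isMemorySet_of_forall_supD_le {ε δ : ℝ} {A B : Finset G} (hε : 0 ≤ ε) (hAB : A ⊆ B)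
    (h : ∀ x y : X, supD ((B : Set G) \ A) x y ≤ δ → supD (B : Set G) x y ≤ ε) :
    IsMemorySet G X ε δ A B :=
  ⟨Finset.coe_subset.2 hAB, fun x y hxy ↦
    ⟨y, h x y hxy, Real.iSup_le (fun g ↦ (dist_self ((g : G) • y)).trans_le hε) hε⟩⟩

end SupD

theorem asymptotic_iff_eventually_cofinite {G X : Type*} [SMul G X] [PseudoMetricSpace X]
    {x y : X} :
    Asymptotic G x y ↔ ∀ ε > 0, ∀ᶠ g : G in cofinite, dist (g • x) (g • y) ≤ ε := by
  refine forall₂_congr fun ε _ ↦ ⟨fun ⟨F, hF⟩ ↦ ?_, fun h ↦ ?_⟩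
  · filter_upwards [F.eventually_cofinite_notMem] with g hg using hF g hg
  · rw [eventually_cofinite] at h
    exact ⟨h.toFinset, fun g hg ↦ by simpa using hg⟩

section Compactness

variable {G X : Type*} [SMul G X] [PseudoMetricSpace X] [ContinuousConstSMul G X]

theorem continuous_dist_const_smul (g : G) :
    Continuous fun p : X × X ↦ dist (g • p.1) (g • p.2) :=
  (continuous_fst.const_smul g).dist (continuous_snd.const_smul g)

theorem exists_finset_lt_dist_smul_of_isCompact {K : Set (X × X)} (hK : IsCompact K) {P : Set G}
    {δ : ℝ} (h : ∀ p ∈ K, ∃ g ∈ P, δ < dist (g • p.1) (g • p.2)) :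
    ∃ F : Finset G, ↑F ⊆ P ∧ ∀ p ∈ K, ∃ g ∈ F, δ < dist (g • p.1) (g • p.2) := by
  obtain ⟨F, hFP, hF, hcover⟩ := hK.elim_finite_subcover_image
    (c := fun g ↦ {p : X × X | δ < dist (g • p.1) (g • p.2)})
    (fun g _ ↦ isOpen_lt continuous_const (continuous_dist_const_smul g))
    (fun p hp ↦ Set.mem_iUnion₂.2 <| by simpa using h p hp)
  lift F to Finset G using hF
  exact ⟨F, hFP, fun p hp ↦ by simpa using hcover hp⟩

variable [CompactSpace X]

theorem exists_finset_lt_dist_smul_of_le_dist {c ε : ℝ} (hε : 0 < ε)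
    (hc : ∀ x y : X, x ≠ y → ∃ g : G, c < dist (g • x) (g • y)) :
    ∃ F : Finset G, ∀ x y : X, ε ≤ dist x y → ∃ g ∈ F, c < dist (g • x) (g • y) := by
  have hK : IsClosed {p : X × X | ε ≤ dist p.1 p.2} := isClosed_le continuous_const continuous_dist
  have hsep : ∀ p ∈ {p : X × X | ε ≤ dist p.1 p.2},
      ∃ g ∈ (Set.univ : Set G), c < dist (g • p.1) (g • p.2) := by
    intro p hp
    have hne : p.1 ≠ p.2 := fun heq ↦ hε.not_ge (hp.trans_eq (by rw [heq, dist_self]))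
    simpa using hc p.1 p.2 hne
  obtain ⟨F, -, hF⟩ := exists_finset_lt_dist_smul_of_isCompact hK.isCompact hsep
  exact ⟨F, fun x y hxy ↦ hF (x, y) hxy⟩

theorem exists_finset_forall_dist_smul_lt {A : Finset G} {ε δ : ℝ} (hε : 0 < ε)
    (hA : ∀ x y : X, (∀ g ∉ A, dist (g • x) (g • y) ≤ δ) → x = y) :
    ∃ F : Finset G, (F : Set G) ⊆ (A : Set G)ᶜ ∧ ∀ x y : X,
      (∀ g ∈ F, dist (g • x) (g • y) ≤ δ) → ∀ a ∈ A, dist (a • x) (a • y) < ε := by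
  have hK : IsClosed (⋃ a ∈ A, {p : X × X | ε ≤ dist (a • p.1) (a • p.2)}) :=
    isClosed_biUnion_finset fun a _ ↦
      isClosed_le continuous_const (continuous_dist_const_smul a)
  have hsep : ∀ p ∈ ⋃ a ∈ A, {p : X × X | ε ≤ dist (a • p.1) (a • p.2)},
      ∃ g ∈ (A : Set G)ᶜ, δ < dist (g • p.1) (g • p.2) := by
    intro p hp
    obtain ⟨a, -, ha⟩ := Set.mem_iUnion₂.1 hp
    by_contra! hle
    have heq : p.1 = p.2 := hA p.1 p.2 hle
    exact hε.not_ge (ha.trans_eq (by rw [heq, dist_self]))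
  obtain ⟨F, hFA, hF⟩ := exists_finset_lt_dist_smul_of_isCompact hK.isCompact hsep
  refine ⟨F, hFA, fun x y hle a ha ↦ ?_⟩
  by_contra! hge
  obtain ⟨f, hf, hlt⟩ := hF (x, y) (Set.mem_iUnion₂.2 ⟨a, ha, hge⟩)
  exact (hle f hf).not_gt hlt

theorem exists_isMemorySet_of_forall_eq {A : Finset G} {ε δ : ℝ} (hδ : 0 ≤ δ) (hδε : δ ≤ ε)
    (hε : 0 < ε) (hA : ∀ x y : X, (∀ g ∉ A, dist (g • x) (g • y) ≤ δ) → x = y) :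
    ∃ B : Finset G, IsMemorySet G X ε δ A B := by
  classical
  obtain ⟨F, hFA, hF⟩ := exists_finset_forall_dist_smul_lt hε hA
  refine ⟨A ∪ F, isMemorySet_of_forall_supD_le hε.le Finset.subset_union_left fun x y hxy ↦ ?_⟩
  rw [supD_le_iff hδ] at hxy
  have hle : ∀ g ∈ F, dist (g • x) (g • y) ≤ δ := fun g hg ↦
    hxy g ⟨Finset.mem_union_right A hg, hFA hg⟩
  rw [supD_le_iff hε.le]
  intro g hg
  obtain hgA | hgF := Finset.mem_union.1 hg
  · exact (hF x y hle g hgA).le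
  · exact (hle g hgF).trans hδε

end Compactness

theorem asymptotic_of_eventually_dist_smul_le {G X : Type*} [Semigroup G] [IsLeftCancelMul G]
    [PseudoMetricSpace X] [CompactSpace X] [SemigroupAction G X] [ContinuousConstSMul G X] {c : ℝ}
    (hc : ∀ x y : X, x ≠ y → ∃ g : G, c < dist (g • x) (g • y)) {x y : X}
    (hxy : ∀ᶠ g : G in cofinite, dist (g • x) (g • y) ≤ c) : Asymptotic G x y := by
  refine asymptotic_iff_eventually_cofinite.2 fun ε hε ↦ ?_
  obtain ⟨F, hF⟩ := exists_finset_lt_dist_smul_of_le_dist hε hc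
  have hFxy : ∀ᶠ g in cofinite, ∀ f ∈ F, dist ((f * g) • x) ((f * g) • y) ≤ c :=
    (eventually_all_finset F).2 fun f _ ↦ (mul_right_injective f).tendsto_cofinite.eventually hxy
  filter_upwards [hFxy] with g hg
  by_contra! hlt
  obtain ⟨f, hf, hcf⟩ := hF (g • x) (g • y) hlt.le
  rw [← mul_smul, ← mul_smul] at hcf
  exact (hg f hf).not_gt hcf

theorem stmt8_general {G X : Type*} [Semigroup G] [IsLeftCancelMul G]
    [PseudoMetricSpace X] [CompactSpace X] [SemigroupAction G X] [ContinuousConstSMul G X]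
    (hexp : Expansive G X) (hnoasym : ∀ x y : X, Asymptotic G x y → x = y) :
    TMP G X := by
  obtain ⟨c, hc_pos, hc⟩ := hexp
  intro ε hε
  refine ⟨min c ε, lt_min hc_pos hε, fun A ↦ ?_⟩
  refine exists_isMemorySet_of_forall_eq (le_min hc_pos.le hε.le) (min_le_right c ε) hε
    fun x y hxy ↦ hnoasym x y (asymptotic_of_eventually_dist_smul_le hc ?_)
  filter_upwards [A.eventually_cofinite_notMem] with g hg
  exact (hxy g hg).trans (min_le_left c ε)

/-- If an action of a countably infinite group on a compact metrizable space
is expansive and has no off-diagonal asymptotic pairs, then it has the topological Markov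
property. -/
theorem stmt8 (G X : Type*) [Group G] [Countable G] [Infinite G]
    [MetricSpace X] [CompactSpace X] [MulAction G X]
    (hcont : ∀ g : G, Continuous fun x : X => g • x)
    (hexp : Expansive G X)
    (hnoasym : ∀ x y : X, Asymptotic G x y → x = y) :
    TMP G X :=
  have : ContinuousConstSMul G X := ⟨hcont⟩
  stmt8_general hexp hnoasym
end
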